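/- Let H ∈ ℝ^{p×N}, α₁,…,α_N > 0 with ᾱ = ∑_{i=1}^N α_i, and let V = [v₁,…,v_N] satisfy ‖v_i‖₂² = α_i for all i. Define the Hessian bilinear form ∇²ℓ(V)[U] = −2U·M(V)^{-1} + 2(H+V)·M(V)^{-1}·(Uᵀ(H+V)+(H+V)ᵀU)·M(V)^{-1} with M(V) = I_N + (H+V)ᵀ(H+V). Then for every U ∈ ℝ^{p×N}, ‖∇²ℓ(V)[U]‖_F ≤ (2 + 4(‖H‖_F + √ᾱ)²)·‖U‖_F. -/

import Mathlib

/-!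
Write `W = H + V` and `M = 1 + WᵀW`. Right multiplication by `M⁻¹` does not increase the Frobenius
norm: if `B = A M⁻¹`, then `A = B + B WᵀW`, and expanding the square gives
`‖A‖² = ‖B‖² + 2 ‖B Wᵀ‖² + ‖B WᵀW‖² ≥ ‖B‖²` (`norm_le_norm_mul`, `norm_mul_inv_le`). Hence the first term of the
Hessian is at most `2 ‖U‖`, while submultiplicativity bounds the second by `2 ‖W‖ (2 ‖U‖ ‖W‖)`.
Finally `‖W‖ ≤ ‖H‖ + ‖V‖`, where `‖V‖² = ∑ α_i` by the hypothesis on the columns of `V`.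
-/

open Matrix

/-- The Frobenius norm of a real matrix. -/
noncomputable def frob {p N : ℕ} (A : Matrix (Fin p) (Fin N) ℝ) : ℝ :=
  Real.sqrt (∑ x, ∑ i, (A x i) ^ 2)

/-- `M(V) = I_N + (H+V)ᵀ(H+V)`. -/
noncomputable def Mmat {p N : ℕ} (H V : Matrix (Fin p) (Fin N) ℝ) :
    Matrix (Fin N) (Fin N) ℝ :=
  1 + (H + V)ᵀ * (H + V)

/-- The Euclidean Hessian of `ℓ` at `V` applied to `U`:
`∇²ℓ(V)[U] = −2U·M(V)⁻¹ + 2(H+V)·M(V)⁻¹·(Uᵀ(H+V)+(H+V)ᵀU)·M(V)⁻¹`. -/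
noncomputable def hess {p N : ℕ} (H V U : Matrix (Fin p) (Fin N) ℝ) :
    Matrix (Fin p) (Fin N) ℝ :=
  (-2 : ℝ) • (U * (Mmat H V)⁻¹)
    + (2 : ℝ) • ((H + V) * (Mmat H V)⁻¹ * (Uᵀ * (H + V) + (H + V)ᵀ * U) * (Mmat H V)⁻¹)

open scoped Matrix.Norms.Frobenius

theorem norm_sq_eq_sum {m n : ℕ} (A : Matrix (Fin m) (Fin n) ℝ) :
    ‖A‖ ^ 2 = ∑ x, ∑ i, (A x i) ^ 2 := by
  rw [Matrix.frobenius_norm_def, ← Real.sqrt_eq_rpow, Real.sq_sqrt (by positivity)]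
  simp

theorem frob_eq_norm {m n : ℕ} (A : Matrix (Fin m) (Fin n) ℝ) : frob A = ‖A‖ := by
  rw [frob, ← norm_sq_eq_sum, Real.sqrt_sq (norm_nonneg _)]

theorem norm_sq_eq_trace {m n : ℕ} (A : Matrix (Fin m) (Fin n) ℝ) :
    ‖A‖ ^ 2 = (Aᵀ * A).trace := by
  rw [norm_sq_eq_sum, Finset.sum_comm]
  simp [Matrix.trace, Matrix.mul_apply, sq]

theorem norm_transpose_eq {m n : ℕ} (A : Matrix (Fin m) (Fin n) ℝ) : ‖Aᵀ‖ = ‖A‖ :=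
  Matrix.frobenius_norm_transpose A

theorem norm_le_norm_mul {k m n : ℕ} (W : Matrix (Fin k) (Fin n) ℝ)
    (B : Matrix (Fin m) (Fin n) ℝ) : ‖B‖ ≤ ‖B * (1 + Wᵀ * W)‖ := by
  have h : ‖B * (1 + Wᵀ * W)‖ ^ 2
      = ‖B‖ ^ 2 + 2 * ‖B * Wᵀ‖ ^ 2 + ‖B * (Wᵀ * W)‖ ^ 2 := by
    -- Both cross terms equal `‖B Wᵀ‖²` by cyclicity of the trace.
    have h1 : (Bᵀ * (B * (Wᵀ * W))).trace = ‖B * Wᵀ‖ ^ 2 := by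
      rw [norm_sq_eq_trace, ← Matrix.mul_assoc B, ← Matrix.mul_assoc, Matrix.trace_mul_comm]
      simp [Matrix.mul_assoc]
    have h2 : ((B * (Wᵀ * W))ᵀ * B).trace = ‖B * Wᵀ‖ ^ 2 := by
      rw [← h1, ← Matrix.trace_transpose, Matrix.transpose_mul, Matrix.transpose_transpose]
    rw [norm_sq_eq_trace, Matrix.mul_add, Matrix.mul_one, Matrix.transpose_add, Matrix.add_mul,
      Matrix.mul_add, Matrix.mul_add, Matrix.trace_add, Matrix.trace_add, Matrix.trace_add, h1, h2,
      ← norm_sq_eq_trace, ← norm_sq_eq_trace]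
    ring
  refine (sq_le_sq₀ (norm_nonneg _) (norm_nonneg _)).mp ?_
  rw [h]
  nlinarith [sq_nonneg ‖B * Wᵀ‖, sq_nonneg ‖B * (Wᵀ * W)‖]

/-- `M` is positive definite, so its `nonsing_inv` is a genuine inverse. -/
theorem isUnit_det_Mmat {p N : ℕ} (H V : Matrix (Fin p) (Fin N) ℝ) :
    IsUnit (Mmat H V).det := by
  have h : (Mmat H V).PosDef := by
    refine Matrix.PosDef.one.add_posSemidef ?_
    simpa using Matrix.posSemidef_conjTranspose_mul_self (H + V)
  exact h.det_pos.ne'.isUnit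

theorem norm_mul_inv_le {p N m : ℕ} (H V : Matrix (Fin p) (Fin N) ℝ)
    (A : Matrix (Fin m) (Fin N) ℝ) : ‖A * (Mmat H V)⁻¹‖ ≤ ‖A‖ := by
  have h := norm_le_norm_mul (H + V) (A * (Mmat H V)⁻¹)
  change _ ≤ ‖A * (Mmat H V)⁻¹ * Mmat H V‖ at h
  rwa [Matrix.nonsing_inv_mul_cancel_right _ _ (isUnit_det_Mmat H V)] at h

/-- If the columns of `V` satisfy `‖v_i‖₂² = α_i` with `α_i > 0` and `ᾱ = ∑ α_i`, then
for every `U`, `‖∇²ℓ(V)[U]‖_F ≤ (2 + 4(‖H‖_F + √ᾱ)²)·‖U‖_F`. -/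
theorem hess_frobenius_bound
    {p N : ℕ} (H V : Matrix (Fin p) (Fin N) ℝ) (α : Fin N → ℝ) (hα : ∀ i, 0 < α i)
    (hV : ∀ i, ∑ x, (V x i) ^ 2 = α i) (U : Matrix (Fin p) (Fin N) ℝ) :
    frob (hess H V U)
      ≤ (2 + 4 * (frob H + Real.sqrt (∑ i, α i)) ^ 2) * frob U := by
  have hVn : Real.sqrt (∑ i, α i) = ‖V‖ := by
    rw [← frob_eq_norm, frob, Finset.sum_comm]
    simp_rw [hV]
  rw [hVn, frob_eq_norm, frob_eq_norm, frob_eq_norm]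
  have hW : ‖H + V‖ ≤ ‖H‖ + ‖V‖ := norm_add_le H V
  have hS : ‖Uᵀ * (H + V) + (H + V)ᵀ * U‖ ≤ 2 * (‖U‖ * ‖H + V‖) := by
    have h1 := Matrix.frobenius_norm_mul Uᵀ (H + V)
    have h2 := Matrix.frobenius_norm_mul (H + V)ᵀ U
    rw [norm_transpose_eq] at h1 h2
    linarith [norm_add_le (Uᵀ * (H + V)) ((H + V)ᵀ * U)]
  have hT : ‖(H + V) * (Mmat H V)⁻¹ * (Uᵀ * (H + V) + (H + V)ᵀ * U) * (Mmat H V)⁻¹‖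
      ≤ ‖H + V‖ * (2 * (‖U‖ * ‖H + V‖)) :=
    (norm_mul_inv_le H V _).trans <| (Matrix.frobenius_norm_mul _ _).trans <|
      mul_le_mul (norm_mul_inv_le H V _) hS (norm_nonneg _) (norm_nonneg _)
  have hsq : ‖H + V‖ ^ 2 * ‖U‖ ≤ (‖H‖ + ‖V‖) ^ 2 * ‖U‖ := by gcongr
  have hU := norm_mul_inv_le H V U
  unfold hess
  refine (norm_add_le _ _).trans ?_
  rw [norm_smul, norm_smul, norm_neg, Real.norm_ofNat]
  linarith
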